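/- arXiv:2508.01075 — 3 statements merged into one kernel-verified Lean document; each statement's English description precedes it below -/
import Mathlib

section
/- Let X be a uniformly s-path connected metric space with control function ρ, let A ⊆ X, let r > 0, and let C be an s-path component of X \ N_r(A). Then for every R > 0 one has ∂_R(C) ⊆ N_{ρ(R)+r}(A); in particular, C is a coarse complementary component of A. -/
/-!
The key point is that an `s`-path component `C` of `W` absorbs every point of `W` at distance at
most `s` from `C` (`IsSPathComponent.mem_of_dist_le`), because adding such a point keeps `C`
`s`-path connected. Let `W = X \ N_r(A)`, and let `x ∉ C` be at distance at most `R` from `c ∈ C`.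
An `s`-path from `x` to `c` of diameter at most `ρ(R)` must then meet `N_r(A)`, since otherwise
walking along it from `c` back to `x` would never leave `C`. Hence `x ∈ N_{ρ(R)+r}(A)`.

For the coarse statement, a point of `N_R(C) ∩ N_R(X \ C)` is at distance less than `R` from a point
of `∂_{2R}(C)`, so `R' = ρ(2R) + r + R` works.
-/

/-- The open `R`-neighborhood `N_R(A) = {x | dist(x, A) < R}` of a subset of a metric space. -/
def coarseNbhd {X : Type*} [MetricSpace X] (R : ℝ) (A : Set X) : Set X :=
  {x | ∃ a ∈ A, dist x a < R}

/-- `C` is a coarse complementary component of `A`: for every `R > 0` there is `R' > 0`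
with `N_R(C) ∩ N_R(X \ C) ⊆ N_{R'}(A)`. -/
def IsCoarseComplementaryComponent {X : Type*} [MetricSpace X] (A C : Set X) : Prop :=
  ∀ R > (0 : ℝ), ∃ R' > (0 : ℝ), coarseNbhd R C ∩ coarseNbhd R Cᶜ ⊆ coarseNbhd R' A

/-- The `r`-boundary `∂_r(C) = {x ∈ X \ C | dist(x, C) ≤ r}`. -/
def rBoundary {X : Type*} [MetricSpace X] (r : ℝ) (C : Set X) : Set X :=
  {x | x ∉ C ∧ ∃ c ∈ C, dist x c ≤ r}

/-- An `s`-path from `x` to `y` lying in `M`: a finite sequence `x = x_0, …, x_n = y` of points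
of `M` with consecutive distances at most `s`. -/
def IsSPath {X : Type*} [MetricSpace X] (s : ℝ) (M : Set X) (x y : X) : Prop :=
  ∃ (n : ℕ) (f : ℕ → X), f 0 = x ∧ f n = y ∧ (∀ i ≤ n, f i ∈ M) ∧
    ∀ i < n, dist (f i) (f (i + 1)) ≤ s

/-- A subset `M` is `s`-path connected if any two of its points are joined by an
`s`-path lying in `M`. -/
def SPathConnected {X : Type*} [MetricSpace X] (s : ℝ) (M : Set X) : Prop :=
  ∀ x ∈ M, ∀ y ∈ M, IsSPath s M x y

/-- `C` is an `s`-path component of `W`: a maximal `s`-path connected subset of `W`. -/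
def IsSPathComponent {X : Type*} [MetricSpace X] (s : ℝ) (W C : Set X) : Prop :=
  C ⊆ W ∧ SPathConnected s C ∧ ∀ D, C ⊆ D → D ⊆ W → SPathConnected s D → D = C

/-- `X` is uniformly `s`-path connected with control function `ρ`: any two points at distance
at most `r` are joined by an `s`-path in `X` of diameter at most `ρ(r)`. -/
def UniformlySPathConnected (X : Type*) [MetricSpace X] (s : ℝ) (ρ : ℝ → ℝ) : Prop :=
  ∀ (x y : X) (r : ℝ), dist x y ≤ r →
    ∃ (n : ℕ) (f : ℕ → X), f 0 = x ∧ f n = y ∧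
      (∀ i < n, dist (f i) (f (i + 1)) ≤ s) ∧
      ∀ i ≤ n, ∀ j ≤ n, dist (f i) (f j) ≤ ρ r

theorem IsSPath.mono {X : Type*} [MetricSpace X] {s : ℝ} {M N : Set X} {x y : X}
    (h : IsSPath s M x y) (hMN : M ⊆ N) : IsSPath s N x y := by
  obtain ⟨n, f, h0, hn, hM, hd⟩ := h
  exact ⟨n, f, h0, hn, fun i hi => hMN (hM i hi), hd⟩

theorem IsSPath.cons {X : Type*} [MetricSpace X] {s : ℝ} {M : Set X} {x y z : X}
    (h : IsSPath s M y z) (hx : x ∈ M) (hxy : dist x y ≤ s) : IsSPath s M x z := by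
  obtain ⟨n, f, h0, hn, hM, hd⟩ := h
  refine ⟨n + 1, fun i => Nat.casesOn i x f, rfl, hn, ?_, ?_⟩
  · rintro (_ | i) hi
    · exact hx
    · exact hM i (by omega)
  · rintro (_ | i) hi
    · simpa [h0] using hxy
    · exact hd i (by omega)

theorem IsSPath.symm {X : Type*} [MetricSpace X] {s : ℝ} {M : Set X} {x y : X}
    (h : IsSPath s M x y) : IsSPath s M y x := by
  obtain ⟨n, f, h0, hn, hM, hd⟩ := h
  refine ⟨n, fun i => f (n - i), by simpa using hn, by simpa using h0,
    fun i _ => hM _ (by omega), fun i hi => ?_⟩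
  have h := hd (n - (i + 1)) (by omega)
  rw [show n - (i + 1) + 1 = n - i by omega] at h
  rwa [dist_comm]

/-- An `s`-path component of `W` contains every point of `W` at distance at most `s` from one of
its points. -/
theorem IsSPathComponent.mem_of_dist_le {X : Type*} [MetricSpace X] {s : ℝ} {W C : Set X}
    (hC : IsSPathComponent s W C) {y c : X} (hy : y ∈ W) (hc : c ∈ C) (hyc : dist y c ≤ s) :
    y ∈ C := by
  obtain ⟨hCW, hconn, hmax⟩ := hC
  have hsub : C ⊆ insert y C := Set.subset_insert y C
  have hfrom : ∀ z ∈ C, IsSPath s (insert y C) y z := fun z hz =>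
    ((hconn c hc z hz).mono hsub).cons (Set.mem_insert y C) hyc
  have hD : insert y C = C := by
    refine hmax _ hsub (Set.insert_subset hy hCW) ?_
    rintro a (rfl | ha) b (rfl | hb)
    · exact ⟨0, fun _ => b, rfl, rfl, fun _ _ => Set.mem_insert b C, fun i hi => by omega⟩
    · exact hfrom b hb
    · exact (hfrom a ha).symm
    · exact (hconn a ha b hb).mono hsub
  exact hD ▸ Set.mem_insert y C

theorem rBoundary_subset_coarseNbhd {X : Type*} [MetricSpace X] {s : ℝ} {ρ : ℝ → ℝ}
    (hX : UniformlySPathConnected X s ρ) {A : Set X} {r : ℝ}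
    {C : Set X} (hC : IsSPathComponent s (coarseNbhd r A)ᶜ C) (R : ℝ) :
    rBoundary R C ⊆ coarseNbhd (ρ R + r) A := by
  rintro x ⟨hxC, c, hc, hxc⟩
  obtain ⟨n, f, h0, hn, hd, hdiam⟩ := hX x c R hxc
  by_cases hmeet : ∃ i ≤ n, f i ∈ coarseNbhd r A
  · obtain ⟨i, hi, a, ha, hia⟩ := hmeet
    refine ⟨a, ha, ?_⟩
    have h1 := hdiam 0 (Nat.zero_le n) i hi
    rw [h0] at h1
    linarith [dist_triangle x (f i) a]
  · push Not at hmeet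
    -- Otherwise the path stays in `C` when followed backwards from its endpoint `c`.
    have hback : ∀ k ≤ n, f (n - k) ∈ C := by
      intro k
      induction k with
      | zero => intro _; simpa [hn] using hc
      | succ k ih =>
        intro hk
        have h := hd (n - (k + 1)) (by omega)
        rw [show n - (k + 1) + 1 = n - k by omega] at h
        exact hC.mem_of_dist_le (hmeet _ (by omega)) (ih (by omega)) h
    have h := hback n le_rfl
    rw [Nat.sub_self, h0] at h
    exact absurd h hxC

/-- If `X` is uniformly `s`-path connected with control function `ρ`, `A ⊆ X`, `r > 0` and `C`
is an `s`-path component of `X \ N_r(A)`, then for every `R > 0` one has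
`∂_R(C) ⊆ N_{ρ(R)+r}(A)`; in particular `C` is a coarse complementary component of `A`. -/
theorem sPathComponent_isCoarseComplementaryComponent
    {X : Type*} [MetricSpace X] (s : ℝ) (hs : 0 < s) (ρ : ℝ → ℝ) (hρ : ∀ t, 0 ≤ ρ t)
    (hX : UniformlySPathConnected X s ρ) (A : Set X) (r : ℝ) (hr : 0 < r)
    (C : Set X) (hC : IsSPathComponent s (coarseNbhd r A)ᶜ C) :
    (∀ R > (0 : ℝ), rBoundary R C ⊆ coarseNbhd (ρ R + r) A) ∧
      IsCoarseComplementaryComponent A C := by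
  have hbd := rBoundary_subset_coarseNbhd hX hC
  refine ⟨fun R _ => hbd R, fun R hR => ⟨ρ (2 * R) + r + R, ?_, ?_⟩⟩
  · linarith [hρ (2 * R)]
  · rintro x ⟨⟨c, hc, hxc⟩, d, hdC, hxd⟩
    have hdc : dist d c ≤ 2 * R := by
      linarith [dist_triangle_left d c x]
    obtain ⟨a, ha, hda⟩ := hbd (2 * R) ⟨hdC, c, hc, hdc⟩
    exact ⟨a, ha, by linarith [dist_triangle x d a]⟩
end

section
/- Let X be a metric space, A ⊆ X, and let C be a coarse complementary component of A in X. Then for each s > 0 there exists p > 0 (depending on s and C) such that every s-path connected subset M ⊆ X \ N_p(A) satisfies M ⊆ C or M ∩ C = ∅ (i.e., M ⊆ X \ C). -/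
/-- If `C` is a coarse complementary component of `A` in `X`, then for each `s > 0` there is
`p > 0` such that every `s`-path connected subset `M ⊆ X \ N_p(A)` satisfies `M ⊆ C` or
`M ∩ C = ∅`. -/
theorem sPathConnected_subset_or_disjoint
    {X : Type*} [MetricSpace X] (A C : Set X)
    (hC : IsCoarseComplementaryComponent A C) (s : ℝ) (hs : 0 < s) :
    ∃ p > (0 : ℝ), ∀ M : Set X, M ⊆ (coarseNbhd p A)ᶜ → SPathConnected s M →
      M ⊆ C ∨ M ∩ C = ∅ := by
  -- The strict inequality in the neighborhoods forces a radius larger than `s`.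
  obtain ⟨p, hp, hsub⟩ := hC (s + 1) (by linarith)
  refine ⟨p, hp, fun M hM hconn => ?_⟩
  by_cases hMC : (M ∩ C).Nonempty
  · left
    obtain ⟨x, hxM, hxC⟩ := hMC
    intro y hy
    obtain ⟨n, f, h0, hn, hfM, hd⟩ := hconn x hxM y hy
    have key : ∀ i ≤ n, f i ∈ C := by
      intro i
      induction i with
      | zero => intro _; rwa [h0]
      | succ i ih =>
        intro hi
        by_contra hnot
        -- A step leaving `C` puts `f i` within `s` of both `C` and its complement.
        refine hM (hfM i (by omega)) (hsub ⟨⟨f i, ih (by omega), ?_⟩, ⟨f (i + 1), hnot, ?_⟩⟩)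
        · rw [dist_self]; linarith
        · linarith [hd i (by omega)]
    exact hn ▸ key n le_rfl
  · exact Or.inr (Set.not_nonempty_iff_eq_empty.mp hMC)
end

section
/- Let α be a topological space equipped with a circular order such that for all a, b ∈ α the open interval {y ∈ α | sbtw a y b} is an open set. Let x : ℕ → α be a sequence and z ∈ α such that sbtw (x i) (x (i+1)) z holds for every i ≥ 0. Then x 0 is not a cluster point of the subsequence (x i)_{i ≥ 2}; in particular, no subsequence of (x i)_{i ≥ 2} converges to x 0. -/
open Filter

/-- Let `α` be a topological space with a circular order in which the open intervals
`{y | sbtw a y b}` are open sets. If `x : ℕ → α` is a sequence and `z` a point with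
`sbtw (x i) (x (i+1)) z` for all `i`, then `x 0` is not a cluster point of the
subsequence `(x i)_{i ≥ 2}`; in particular no subsequence of `(x i)_{i ≥ 2}`
converges to `x 0`. -/
theorem not_clusterPt_of_sbtw_chain {α : Type*} [TopologicalSpace α] [CircularOrder α]
    (hopen : ∀ a b : α, IsOpen {y : α | sbtw a y b})
    (x : ℕ → α) (z : α) (h : ∀ i : ℕ, sbtw (x i) (x (i + 1)) z) :
    ¬ MapClusterPt (x 0) atTop (fun i : ℕ => x (i + 2)) ∧
      ∀ φ : ℕ → ℕ, StrictMono φ → (∀ i, 2 ≤ φ i) →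
        ¬ Tendsto (fun i => x (φ i)) atTop (nhds (x 0)) := by
  -- The interval `(z, x 1)` is a neighbourhood of `x 0` which misses every `x n` with `n ≥ 2`,
  -- because all of these lie in the opposite interval `(x 1, z)`.
  have hchain : ∀ n, sbtw (x 1) (x (n + 2)) z := by
    intro n
    induction n with
    | zero => exact h 1
    | succ k ih => exact ih.trans_left (h (k + 2))
  have hout : ∀ n, 2 ≤ n → ¬ sbtw z (x n) (x 1) := by
    intro n hn
    obtain ⟨k, rfl⟩ := Nat.exists_eq_add_of_le' hn
    exact (hchain k).not_sbtw
  have hnhds : {y : α | sbtw z y (x 1)} ∈ nhds (x 0) :=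
    (hopen z (x 1)).mem_nhds (h 0).cyclic_right
  refine ⟨fun hc => ?_, fun φ _ hφ ht => ?_⟩
  · obtain ⟨n, hn⟩ := (hc.frequently hnhds).exists
    exact hout (n + 2) (Nat.le_add_left 2 n) hn
  · obtain ⟨n, hn⟩ := (ht.eventually hnhds).exists
    exact hout (φ n) (hφ n) hn
end
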